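/- Let R be a left Noetherian ring. The following are equivalent: (1) R has a left Artinian left quotient ring Q = C⁻¹R; (2) C' ⊆ C; (3) for each element ᾱ ∈ C̄ there exists a regular element c ∈ C such that ᾱ = c + n (every regular element of R̄ lifts to a regular element of R). -/

import Mathlib

open Function

universe u v

/-- A regular element of a ring: a two-sided non-zero-divisor. -/
def IsRegElem {R : Type*} [Ring R] (c : R) : Prop :=
  (∀ x : R, c * x = 0 → x = 0) ∧ (∀ x : R, x * c = 0 → x = 0)

/-- The set `C` of regular elements of a ring. -/
def regSet (R : Type*) [Ring R] : Set R := {c : R | IsRegElem c}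

/-- A (left) ideal is two-sided. -/
def Ideal.IsTwoSidedNC {R : Type*} [Ring R] (I : Ideal R) : Prop :=
  ∀ a ∈ I, ∀ r : R, a * r ∈ I

/-- A prime (two-sided) ideal of a possibly noncommutative ring. -/
def Ideal.IsPrimeNC {R : Type*} [Ring R] (P : Ideal R) : Prop :=
  P ≠ ⊤ ∧ P.IsTwoSidedNC ∧ ∀ a b : R, (∀ r : R, a * r * b ∈ P) → a ∈ P ∨ b ∈ P

/-- The prime radical `n` of a ring: the intersection of all prime ideals. -/
def primeRadical (R : Type*) [Ring R] : Ideal R := sInf {P : Ideal R | P.IsPrimeNC}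

/-- `n` is a nilpotent ideal. -/
def IsNilpotentIdeal {R : Type*} [Ring R] (I : Ideal R) : Prop := ∃ k : ℕ, I ^ (k + 1) = ⊥

/-- `φ : R →+* Q` realizes `Q` as a left quotient ring `C⁻¹R` of `R`:  `R` embeds in `Q`,
every regular element of `R` becomes invertible in `Q`, and every element of `Q` has the
form `(φ c)⁻¹ * (φ r)` with `c` regular. -/
structure IsLeftQuotRing {R : Type u} {Q : Type v} [Ring R] [Ring Q] (φ : R →+* Q) : Prop where
  inj : Function.Injective φ
  isUnit : ∀ c : R, IsRegElem c → IsUnit (φ c)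
  denom : ∀ q : Q, ∃ c r : R, IsRegElem c ∧ φ c * q = φ r

/-- Data of a left quotient ring of `R`. -/
structure LeftQuotData (R : Type u) [Ring R] : Type (u + 1) where
  Q : Type u
  [instQ : Ring Q]
  φ : R →+* Q
  quot : IsLeftQuotRing φ

attribute [instance] LeftQuotData.instQ

/-- `R` has a left Artinian left quotient ring `Q = C⁻¹R`. -/
def HasArtinianLeftQuot (R : Type u) [Ring R] : Prop :=
  ∃ d : LeftQuotData R, IsArtinianRing d.Q

/-- A subset of a ring is a left annihilator. -/
def IsLeftAnnihilatorSet {R : Type*} [Ring R] (A : Set R) : Prop :=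
  ∃ S : Set R, A = {r : R | ∀ s ∈ S, r * s = 0}

/-- The ascending chain condition on left annihilators. -/
def ACCLeftAnnihilators (R : Type*) [Ring R] : Prop :=
  ∀ f : ℕ → Set R, (∀ i, IsLeftAnnihilatorSet (f i)) → (∀ i j, i ≤ j → f i ⊆ f j) →
    ∃ N, ∀ k, N ≤ k → f k = f N

/-- The module `M` contains no infinite direct sum of nonzero submodules. -/
def NoInfiniteIndepFamily (R : Type*) (M : Type*) [Ring R] [AddCommGroup M] [Module R M] : Prop :=
  ¬ ∃ f : ℕ → Submodule R M, (∀ i, f i ≠ ⊥) ∧ iSupIndep f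

/-- A left Goldie ring: ACC on left annihilators and no infinite direct sums of nonzero
left ideals. -/
def IsLeftGoldie (R : Type*) [Ring R] : Prop :=
  ACCLeftAnnihilators R ∧ NoInfiniteIndepFamily R R

/-- The subquotient `n^i/n^{i+1}` of `R` determined by the prime radical `n`. -/
abbrev grPiece (R : Type*) [Ring R] (i : ℕ) :=
  ↥(primeRadical R ^ i) ⧸
    (Submodule.comap (primeRadical R ^ i : Ideal R).subtype (primeRadical R ^ (i + 1)))

/-- The class of `x ∈ n^i` in `n^i/n^{i+1}`. -/
def grMk {R : Type*} [Ring R] (i : ℕ) (x : R) (hx : x ∈ primeRadical R ^ i) : grPiece R i :=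
  Submodule.Quotient.mk ⟨x, hx⟩

/-- The `C̄`-torsion submodule `τ_i` of `n^i/n^{i+1}` (take the span, which coincides with the
set of torsion elements whenever the latter is a submodule, e.g. when `C̄` is a left Ore set);
here `C̄` is represented through `π : R → R̄` as `{c : R | IsRegElem (π c)}`. -/
def tauSub {R : Type u} {Rbar : Type v} [Ring R] [Ring Rbar] (π : R →+* Rbar) (i : ℕ) :
    Submodule R (grPiece R i) :=
  Submodule.span R {u : grPiece R i | ∃ c : R, IsRegElem (π c) ∧ c • u = 0}

/-- The `C̄`-torsionfree module `f_i = (n^i/n^{i+1})/τ_i`. -/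
abbrev fMod {R : Type u} {Rbar : Type v} [Ring R] [Ring Rbar] (π : R →+* Rbar) (i : ℕ) :=
  grPiece R i ⧸ tauSub π i

/-- The class of `x ∈ n^i` in `f_i`. -/
def fMk {R : Type u} {Rbar : Type v} [Ring R] [Ring Rbar] (π : R →+* Rbar) (i : ℕ) (x : R)
    (hx : x ∈ primeRadical R ^ i) : fMod π i :=
  Submodule.Quotient.mk (grMk i x hx)

/-- The subset `C⁻¹K = {(φ c)⁻¹ (φ a) : c ∈ C, a ∈ K}` of a left quotient ring. -/
def locSet {R : Type u} {Q : Type v} [Ring R] [Ring Q] (φ : R →+* Q) (K : Ideal R) : Set Q :=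
  {q : Q | ∃ c a : R, IsRegElem c ∧ a ∈ K ∧ φ c * q = φ a}

/-- A subset of a ring is a left Ore set (multiplicatively closed and satisfying the left
Ore condition). -/
def IsLeftOreSubset {A : Type*} [Ring A] (S : Set A) : Prop :=
  (1 : A) ∈ S ∧ (∀ s ∈ S, ∀ t ∈ S, s * t ∈ S) ∧
    ∀ s ∈ S, ∀ a : A, ∃ t ∈ S, ∃ b : A, t * a = b * s

/-- A left denominator set. -/
def IsLeftDenominatorSet {A : Type*} [Ring A] (S : Set A) : Prop :=
  IsLeftOreSubset S ∧ ∀ a : A, ∀ s ∈ S, a * s = 0 → ∃ t ∈ S, t * a = 0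


/-!
Write `N` for the prime radical, which is nilpotent, and `T` for the set of elements of `R` that
are regular modulo `N`. In the semiprime Noetherian ring `R ⧸ N` every essential left ideal contains
a regular element (Goldie), so chains of left ideals of `R ⧸ N` stabilize up to torsion with respect
to regular elements. Since `N` is nilpotent, descending chains of left ideals of `R` then stabilize
up to `T`-torsion; consequently an injective endomorphism of a left ideal of `R` has a `T`-torsion
cokernel.

* (3) ⇒ (2): let `e` be a regular lift of `π c`. Right multiplication by `e` is injective on each
  power of `N` and agrees with right multiplication by `c` modulo the next power, so `R ⧸ R c` is
  `T`-torsion, and hence so is the left annihilator of `c`. The lifting property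
  forbids nonzero torsion left ideals: one of them would contain a nonzero element killed by `N`
  and by some `d ∈ T`, hence also by a regular lift of `π d`.
* (2) ⇒ (1): torsion cokernels of right multiplications are the Ore condition, and in `Q`
  stabilizing up to torsion means stabilizing.
* (1) ⇒ (2): `Q N` is a nilpotent two-sided ideal that contracts to `N`, so `c ∈ T` is right
  regular, hence invertible, in the Artinian ring `Q ⧸ Q N`, and units lift modulo a nil ideal.
-/

open scoped nonZeroDivisors

section Essential

/-- `a` meets every nonzero element below `b`. For submodules `A ≤ B` this says that `A` is an
essential submodule of `B`; the inclusion itself is not required. -/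
def IsEssentialIn {α : Type*} [PartialOrder α] [OrderBot α] (a b : α) : Prop :=
  ∀ c ≤ b, Disjoint a c → c = ⊥

theorem exists_forall_le_isEssentialIn {α : Type*} [Lattice α] [OrderBot α] [IsModularLattice α]
    [WellFoundedGT α] {s : Set α} (hs : s.Nonempty) :
    ∃ a ∈ s, ∀ b ∈ s, b ≤ a → IsEssentialIn b a := by
  obtain ⟨k, ⟨a, has, hka⟩, hmax⟩ := wellFounded_gt.has_min {k : α | ∃ a ∈ s, Disjoint k a}
    ⟨⊥, hs.some, hs.some_mem, disjoint_bot_left⟩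
  refine ⟨a, has, fun b hbs hba c hca hbc => ?_⟩
  have hdisj : Disjoint (k ⊔ c) b :=
    hbc.symm.disjoint_sup_left_of_disjoint_sup_right (hka.mono_right (sup_le hca hba))
  have hck : c ≤ k := by
    by_contra hck
    exact hmax (k ⊔ c) ⟨b, hbs, hdisj⟩ (left_lt_sup.mpr hck)
  exact disjoint_self.mp (hka.mono hck hca)

theorem IsEssentialIn.mono_left {α : Type*} [PartialOrder α] [OrderBot α] {a a' b : α}
    (h : IsEssentialIn a b) (ha : a ≤ a') : IsEssentialIn a' b :=
  fun c hc hdisj => h c hc (hdisj.mono_left ha)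

variable {R M M' : Type*} [Ring R] [AddCommGroup M] [Module R M] [AddCommGroup M'] [Module R M']

theorem IsEssentialIn.comap {A B : Submodule R M'} (h : IsEssentialIn A B) (g : M →ₗ[R] M') :
    IsEssentialIn (A.comap g) (B.comap g) := by
  intro C hCB hAC
  have hmap : C.map g = ⊥ := by
    refine h _ (Submodule.map_le_iff_le_comap.mpr hCB) (disjoint_iff_inf_le.mpr ?_)
    rintro _ ⟨hyA, x, hxC, rfl⟩
    rw [(Submodule.mem_bot R).mp (Submodule.disjoint_def.mp hAC x hyA hxC), map_zero]
    exact zero_mem _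
  refine hAC.eq_bot_of_ge fun x hx => ?_
  have hgx : g x = 0 := (Submodule.mem_bot R).mp (hmap ▸ Submodule.mem_map_of_mem hx)
  rw [Submodule.mem_comap, hgx]
  exact zero_mem _

section InjectiveEndomorphism

variable {g : Module.End R M} {K : Submodule R M}

theorem antitone_map_pow (hK : K.map g ≤ K) : Antitone fun n : ℕ => K.map (g ^ n) := by
  refine antitone_nat_of_succ_le fun n => ?_
  rw [pow_succ, Module.End.mul_eq_comp, Submodule.map_comp]
  exact Submodule.map_mono hK

theorem comap_pow_map_pow (hg : Injective g) (n : ℕ) : (K.map (g ^ n)).comap (g ^ n) = K := by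
  refine Submodule.comap_map_eq_of_injective ?_ K
  rw [Module.End.coe_pow]
  exact hg.iterate n

theorem comap_pow_map_pow_succ (hg : Injective g) (n : ℕ) :
    (K.map (g ^ (n + 1))).comap (g ^ n) = K.map g := by
  rw [pow_succ, Module.End.mul_eq_comp, Submodule.map_comp, comap_pow_map_pow hg]

theorem isEssentialIn_map_of_injective [IsNoetherian R M] (hg : Injective g) (hK : K.map g ≤ K) :
    IsEssentialIn (K.map g) K := by
  obtain ⟨_, ⟨n, rfl⟩, hn⟩ := exists_forall_le_isEssentialIn
    (Set.range_nonempty fun n : ℕ => K.map (g ^ n))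
  have hess := (hn _ ⟨n + 1, rfl⟩ (antitone_map_pow hK n.le_succ)).comap (g ^ n)
  rwa [comap_pow_map_pow_succ hg, comap_pow_map_pow hg] at hess

end InjectiveEndomorphism

end Essential

section Goldie

variable {S : Type*} [Ring S]

/-- A semiprime ring, in the elementwise form `b S b = 0 → b = 0`. -/
def IsSemiprimeRing (S : Type*) [Ring S] : Prop :=
  ∀ b : S, (∀ r, b * r * b = 0) → b = 0

/-- The left annihilator `{z | z * a = 0}` of an element, as a left ideal. -/
def leftAnnihilator (a : S) : Ideal S :=
  LinearMap.ker (LinearMap.mulRight S a)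

@[simp]
theorem mem_leftAnnihilator {a z : S} : z ∈ leftAnnihilator a ↔ z * a = 0 :=
  Iff.rfl

theorem leftAnnihilator_le_leftAnnihilator_mul (a b : S) :
    leftAnnihilator a ≤ leftAnnihilator (a * b) := fun z hz => by
  rw [mem_leftAnnihilator] at hz ⊢
  rw [← mul_assoc, hz, zero_mul]

theorem leftAnnihilator_mul (a b : S) :
    leftAnnihilator (a * b) = Submodule.comap (LinearMap.mulRight S a) (leftAnnihilator b) := by
  ext z
  simp only [mem_leftAnnihilator, Submodule.mem_comap, LinearMap.mulRight_apply, mul_assoc]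

theorem IsSemiprimeRing.eq_zero_of_forall_isNilpotent_mul [IsNoetherianRing S]
    (hS : IsSemiprimeRing S) {a : S} (ha : ∀ r, IsNilpotent (r * a)) : a = 0 := by
  by_contra ha0
  obtain ⟨_, ⟨s, hs, rfl⟩, hmax⟩ := set_has_maximal_iff_noetherian.mpr ‹IsNoetherianRing S›
    {I | ∃ s, a * s ≠ 0 ∧ leftAnnihilator (a * s) = I} ⟨_, 1, by rwa [mul_one], rfl⟩
  obtain ⟨r, hr⟩ : ∃ r, a * s * r * (a * s) ≠ 0 := by
    by_contra! h
    exact hs (hS _ h)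
  have hpow : ∀ n, (a * s * r) ^ n * (a * s) ≠ 0 := by
    intro n
    induction n with
    | zero => rwa [pow_zero, one_mul]
    | succ n ih =>
      have hy : (a * s * r) ^ n * (a * s) = a * s * (r * (a * s)) ^ n := mul_pow_mul ..
      rw [pow_succ', mul_assoc, hy]
      rw [hy, mul_assoc] at ih
      have heq := (leftAnnihilator_le_leftAnnihilator_mul (a * s) ((r * (a * s)) ^ n)).eq_of_not_lt
        (by rw [mul_assoc]; exact hmax _ ⟨_, ih, rfl⟩)
      rwa [Ne, ← mem_leftAnnihilator, ← heq]
  obtain ⟨n, hn⟩ := ha (s * r)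
  apply hpow n
  rw [mul_assoc a s r, ← mul_assoc, mul_pow_mul, hn, mul_zero, zero_mul]

theorem eventually_disjoint_leftAnnihilator_span_pow [IsNoetherianRing S] (a : S) :
    ∀ᶠ n in Filter.atTop, Disjoint (leftAnnihilator (a ^ n)) (Ideal.span {a ^ n}) := by
  filter_upwards [Module.End.eventually_disjoint_ker_pow_range_pow (LinearMap.mulRight S a)]
    with n hn
  rw [LinearMap.pow_mulRight] at hn
  refine hn.mono_right fun x hx => ?_
  obtain ⟨r, rfl⟩ := Ideal.mem_span_singleton'.mp hx
  exact ⟨r, rfl⟩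

theorem IsSemiprimeRing.exists_mem_ne_zero_leftAnnihilator_mul_self_le [IsNoetherianRing S]
    (hS : IsSemiprimeRing S) {L : Ideal S} (hL : L ≠ ⊥) :
    ∃ b ∈ L, b ≠ 0 ∧ leftAnnihilator (b * b) ≤ leftAnnihilator b := by
  obtain ⟨x, hxL, hx⟩ := L.ne_bot_iff.mp hL
  obtain ⟨r, hr⟩ : ∃ r, ¬IsNilpotent (r * x) := by
    by_contra! h
    exact hx (hS.eq_zero_of_forall_isNilpotent_mul h)
  obtain ⟨n, hn, hn1⟩ := ((eventually_disjoint_leftAnnihilator_span_pow (r * x)).and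
    (Filter.eventually_ge_atTop 1)).exists
  set b := (r * x) ^ n
  refine ⟨b, Ideal.pow_mem_of_mem _ (L.mul_mem_left r hxL) n hn1, fun h => hr ⟨n, h⟩,
    fun z hz => ?_⟩
  have hzb : z * b ∈ leftAnnihilator b := by rwa [mem_leftAnnihilator, mul_assoc]
  exact Submodule.disjoint_def.mp hn _ hzb
    (Ideal.mul_mem_left _ z (Ideal.mem_span_singleton_self b))

theorem leftAnnihilator_add {a b : S} (hba : b * a = 0)
    (ha : leftAnnihilator (a * a) ≤ leftAnnihilator a) :
    leftAnnihilator (a + b) = leftAnnihilator a ⊓ leftAnnihilator b := by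
  ext z
  simp only [Submodule.mem_inf, mem_leftAnnihilator]
  refine ⟨fun hz => ?_, fun ⟨hza, hzb⟩ => by rw [mul_add, hza, hzb, add_zero]⟩
  have hza : z * a = 0 := ha <| by
    calc z * (a * a) = z * (a + b) * a := by rw [mul_assoc, add_mul, hba, add_zero]
      _ = 0 := by rw [hz, zero_mul]
  rw [mul_add, hza, zero_add] at hz
  exact ⟨hza, hz⟩

theorem leftAnnihilator_add_mul_self_le {a b : S} (hba : b * a = 0)
    (ha : leftAnnihilator (a * a) ≤ leftAnnihilator a)
    (hb : leftAnnihilator (b * b) ≤ leftAnnihilator b) :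
    leftAnnihilator ((a + b) * (a + b)) ≤ leftAnnihilator (a + b) := by
  intro z hz
  rw [mem_leftAnnihilator, ← mul_assoc, ← mem_leftAnnihilator] at hz
  rw [leftAnnihilator_add hba ha, Submodule.mem_inf] at hz ⊢
  have hza : z * a = 0 := ha <| by
    calc z * (a * a) = z * (a + b) * a := by rw [mul_assoc, add_mul, hba, add_zero]
      _ = 0 := hz.1
  refine ⟨hza, hb ?_⟩
  calc z * (b * b) = z * (a + b) * b := by rw [mul_add, hza, zero_add, mul_assoc]
    _ = 0 := hz.2

theorem IsSemiprimeRing.exists_mem_leftAnnihilator_eq_bot [IsNoetherianRing S]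
    (hS : IsSemiprimeRing S) {E : Ideal S} (hE : IsEssentialIn E ⊤) :
    ∃ c ∈ E, leftAnnihilator c = ⊥ := by
  obtain ⟨_, ⟨a, haE, ha, rfl⟩, hmin⟩ := exists_forall_le_isEssentialIn
    (s := {I | ∃ a ∈ E, leftAnnihilator (a * a) ≤ leftAnnihilator a ∧ leftAnnihilator a = I})
    ⟨_, 0, E.zero_mem, by rw [mul_zero], rfl⟩
  refine ⟨a, haE, ?_⟩
  by_contra hbot
  have hmeet : E ⊓ leftAnnihilator a ≠ ⊥ := fun h => hbot (hE _ le_top (disjoint_iff.mpr h))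
  obtain ⟨b, ⟨hbE, hba⟩, hb0, hb⟩ := hS.exists_mem_ne_zero_leftAnnihilator_mul_self_le hmeet
  have hdisj : Disjoint (leftAnnihilator (a + b)) (Ideal.span {b}) := by
    rw [Submodule.disjoint_def]
    intro x hx hxb
    obtain ⟨r, rfl⟩ := Ideal.mem_span_singleton'.mp hxb
    rw [leftAnnihilator_add hba ha, Submodule.mem_inf] at hx
    refine hb ?_
    rw [mem_leftAnnihilator, ← mul_assoc]
    exact hx.2
  refine hb0 (Ideal.span_singleton_eq_bot.mp (hmin _ ⟨a + b, E.add_mem haE hbE,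
    leftAnnihilator_add_mul_self_le hba ha hb, rfl⟩ ?_ _ ?_ hdisj))
  · exact leftAnnihilator_add hba ha ▸ inf_le_left
  · exact (Ideal.span_singleton_le_iff_mem _).mpr hba

theorem IsSemiprimeRing.eq_zero_of_isEssentialIn_leftAnnihilator [IsNoetherianRing S]
    (hS : IsSemiprimeRing S) {x : S} (hx : IsEssentialIn (leftAnnihilator x) ⊤) : x = 0 := by
  refine hS.eq_zero_of_forall_isNilpotent_mul fun t => ?_
  obtain ⟨n, hn⟩ := Filter.eventually_atTop.mp
    (eventually_disjoint_leftAnnihilator_span_pow (t * x))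
  have hess : IsEssentialIn (leftAnnihilator (t * x)) ⊤ :=
    leftAnnihilator_mul t x ▸ hx.comap (LinearMap.mulRight S t)
  have hle : leftAnnihilator (t * x) ≤ leftAnnihilator ((t * x) ^ (n + 1)) :=
    pow_succ' (t * x) n ▸ leftAnnihilator_le_leftAnnihilator_mul _ _
  exact ⟨n + 1, Ideal.span_singleton_eq_bot.mp
    (hess.mono_left hle _ le_top (hn (n + 1) n.le_succ))⟩

theorem IsSemiprimeRing.exists_mem_nonZeroDivisors [IsNoetherianRing S]
    (hS : IsSemiprimeRing S) {E : Ideal S} (hE : IsEssentialIn E ⊤) : ∃ c ∈ E, c ∈ S⁰ := by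
  obtain ⟨c, hcE, hc⟩ := hS.exists_mem_leftAnnihilator_eq_bot hE
  refine ⟨c, hcE, fun r hr => ?_, fun z hz => (Submodule.eq_bot_iff _).mp hc z hz⟩
  have hess := isEssentialIn_map_of_injective (LinearMap.ker_eq_bot.mp hc) (K := ⊤) le_top
  refine hS.eq_zero_of_isEssentialIn_leftAnnihilator (hess.mono_left ?_)
  rintro _ ⟨y, -, rfl⟩
  rw [mem_leftAnnihilator, LinearMap.mulRight_apply, mul_assoc, hr, mul_zero]

end Goldie

section Torsion

variable {R M M' : Type*} [Ring R] [AddCommGroup M] [Module R M] [AddCommGroup M'] [Module R M']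
  {T : Submonoid R}

/-- Every element of `A` is carried into `B` by some element of `T`. For `B ≤ A` this says that
`A ⧸ B` is `T`-torsion; the inclusion is not required, and neither is an Ore condition on `T`. -/
def IsTorsionOver (T : Submonoid R) (A B : Submodule R M) : Prop :=
  ∀ x ∈ A, ∃ d ∈ T, d • x ∈ B

namespace IsTorsionOver

variable {A A' B B' C : Submodule R M}

theorem of_le (h : A ≤ B) : IsTorsionOver T A B := fun x hx =>
  ⟨1, T.one_mem, (one_smul R x).symm ▸ h hx⟩

theorem mono (h : IsTorsionOver T A B) (hA : A' ≤ A) (hB : B ≤ B') : IsTorsionOver T A' B' :=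
  fun x hx => (h x (hA hx)).imp fun _ hd => ⟨hd.1, hB hd.2⟩

theorem mono_submonoid {T' : Submonoid R} (h : IsTorsionOver T A B) (hT : T ≤ T') :
    IsTorsionOver T' A B :=
  fun x hx => (h x hx).imp fun _ hd => ⟨hT hd.1, hd.2⟩

theorem trans (hAB : IsTorsionOver T A B) (hBC : IsTorsionOver T B C) : IsTorsionOver T A C := by
  intro x hx
  obtain ⟨d, hd, hdx⟩ := hAB x hx
  obtain ⟨e, he, hedx⟩ := hBC _ hdx
  exact ⟨e * d, T.mul_mem he hd, by rwa [mul_smul]⟩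

theorem map (h : IsTorsionOver T A B) (g : M →ₗ[R] M') :
    IsTorsionOver T (A.map g) (B.map g) := by
  rintro _ ⟨x, hx, rfl⟩
  obtain ⟨d, hd, hdx⟩ := h x hx
  exact ⟨d, hd, d • x, hdx, map_smul g d x⟩

theorem comap {A B : Submodule R M'} (h : IsTorsionOver T A B) (g : M →ₗ[R] M') :
    IsTorsionOver T (A.comap g) (B.comap g) := fun x hx =>
  (h (g x) hx).imp fun d hd => ⟨hd.1, by rw [Submodule.mem_comap, map_smul]; exact hd.2⟩

theorem sup_of_le (h : IsTorsionOver T A B) (hC : C ≤ B) : IsTorsionOver T (C ⊔ A) B := by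
  intro x hx
  obtain ⟨y, hy, z, hz, rfl⟩ := Submodule.mem_sup.mp hx
  obtain ⟨d, hd, hdz⟩ := h z hz
  exact ⟨d, hd, by rw [smul_add]; exact add_mem (B.smul_mem d (hC hy)) hdz⟩

theorem of_inf_of_sup (hBA : B ≤ A) (hinf : IsTorsionOver T (A ⊓ C) (B ⊓ C))
    (hsup : IsTorsionOver T (A ⊔ C) (B ⊔ C)) : IsTorsionOver T A B := by
  intro x hx
  obtain ⟨d, hd, hdx⟩ := hsup x (Submodule.mem_sup_left hx)
  obtain ⟨y, hy, z, hz, hyz⟩ := Submodule.mem_sup.mp hdx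
  have hzA : z ∈ A := eq_sub_of_add_eq' hyz ▸ sub_mem (A.smul_mem d hx) (hBA hy)
  obtain ⟨e, he, hez⟩ := hinf z ⟨hzA, hz⟩
  refine ⟨e * d, T.mul_mem he hd, ?_⟩
  rw [mul_smul, ← hyz, smul_add]
  exact add_mem (B.smul_mem e hy) hez.1

end IsTorsionOver

/-- From some index on, all the quotients `f n ⧸ f m` are `T`-torsion. -/
def IsEventuallyTorsion (T : Submonoid R) (f : ℕ → Submodule R M) : Prop :=
  ∃ n, ∀ m ≥ n, IsTorsionOver T (f n) (f m)

theorem IsEventuallyTorsion.of_inf_of_sup {f : ℕ → Submodule R M} (hf : Antitone f)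
    {C : Submodule R M} (hinf : IsEventuallyTorsion T fun n => f n ⊓ C)
    (hsup : IsEventuallyTorsion T fun n => f n ⊔ C) : IsEventuallyTorsion T f := by
  obtain ⟨n₁, h₁⟩ := hinf
  obtain ⟨n₂, h₂⟩ := hsup
  refine ⟨max n₁ n₂, fun m hm => .of_inf_of_sup (C := C) (hf hm) ?_ ?_⟩
  · exact (h₁ m (le_of_max_le_left hm)).mono (inf_le_inf_right C (hf (le_max_left n₁ n₂))) le_rfl
  · exact (h₂ m (le_of_max_le_right hm)).mono (sup_le_sup_right (hf (le_max_right n₁ n₂)) C) le_rfl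

/-- The descending chain condition on submodules of `M`, up to `T`-torsion. When `T` is a left Ore
set it says that the localization of `M` at `T` is Artinian. -/
def IsArtinianModTorsion (T : Submonoid R) (M : Type*) [AddCommGroup M] [Module R M] : Prop :=
  ∀ f : ℕ → Submodule R M, Antitone f → IsEventuallyTorsion T f

theorem IsArtinianModTorsion.mono {T' : Submonoid R} (h : IsArtinianModTorsion T M) (hT : T ≤ T') :
    IsArtinianModTorsion T' M := fun f hf =>
  (h f hf).imp fun _ hn m hm => (hn m hm).mono_submonoid hT

theorem IsArtinianModTorsion.isTorsionOver_map_of_injective (h : IsArtinianModTorsion T M)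
    {g : Module.End R M} (hg : Injective g) {K : Submodule R M} (hK : K.map g ≤ K) :
    IsTorsionOver T K (K.map g) := by
  obtain ⟨n, hn⟩ := h (fun n => K.map (g ^ n)) (antitone_map_pow hK)
  have htors := (hn (n + 1) n.le_succ).comap (g ^ n)
  rwa [comap_pow_map_pow_succ hg, comap_pow_map_pow hg] at htors

theorem IsTorsionOver.top_range_pow {g : Module.End R M}
    (h : IsTorsionOver T ⊤ (LinearMap.range g)) (n : ℕ) :
    IsTorsionOver T ⊤ (LinearMap.range (g ^ n)) := by
  induction n with
  | zero => exact .of_le (by rw [pow_zero, Module.End.one_eq_id, LinearMap.range_id])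
  | succ n ih =>
    refine ih.trans ?_
    rw [pow_succ, Module.End.mul_eq_comp, LinearMap.range_comp, LinearMap.range_eq_map (g ^ n)]
    exact h.map (g ^ n)

theorem IsTorsionOver.ker_bot [IsNoetherian R M] {g : Module.End R M}
    (h : IsTorsionOver T ⊤ (LinearMap.range g)) : IsTorsionOver T (LinearMap.ker g) ⊥ := by
  obtain ⟨n, hn⟩ := Filter.eventually_atTop.mp (Module.End.eventually_disjoint_ker_pow_range_pow g)
  intro x hx
  obtain ⟨d, hd, hdx⟩ := h.top_range_pow (n + 1) x Submodule.mem_top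
  have hker : d • x ∈ LinearMap.ker (g ^ (n + 1)) := by
    rw [pow_succ]
    exact LinearMap.ker_le_ker_comp g (g ^ n) (Submodule.smul_mem _ d hx)
  exact ⟨d, hd, (hn (n + 1) n.le_succ).le_bot ⟨hker, hdx⟩⟩

theorem IsSemiprimeRing.isArtinianModTorsion [IsNoetherianRing R] (hR : IsSemiprimeRing R)
    [IsNoetherian R M] : IsArtinianModTorsion R⁰ M := by
  intro f hf
  obtain ⟨_, ⟨n, rfl⟩, hn⟩ := exists_forall_le_isEssentialIn (Set.range_nonempty f)
  refine ⟨n, fun m hm x hx => ?_⟩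
  have hess := (hn (f m) ⟨m, rfl⟩ (hf hm)).comap (LinearMap.toSpanSingleton R M x)
  have htop : (f n).comap (LinearMap.toSpanSingleton R M x) = ⊤ :=
    eq_top_iff.mpr fun r _ => (f n).smul_mem r hx
  obtain ⟨d, hdx, hd⟩ := hR.exists_mem_nonZeroDivisors (htop ▸ hess)
  exact ⟨d, hd, hdx⟩

end Torsion

section NilpotentKernel

variable {R S M : Type*} [Ring R] [Ring S] [AddCommGroup M] [Module R M] {π : R →+* S}
  {T : Submonoid S}

theorem IsNilpotentIdeal.exists_smul_notMem {N : Ideal R} (hN : IsNilpotentIdeal N)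
    {K : Submodule R M} {x : M} (hx : x ∉ K) : ∃ r : R, r • x ∉ K ∧ ∀ y ∈ N, y • r • x ∈ K := by
  obtain ⟨k, hk⟩ := hN
  have hkill : ∀ z ∈ N ^ (k + 1), z • x ∈ K := fun z hz => by
    rw [hk, Submodule.mem_bot] at hz
    rw [hz, zero_smul]
    exact K.zero_mem
  generalize k + 1 = k at hkill
  clear hk
  induction k generalizing x with
  | zero =>
    rw [Submodule.pow_zero, Ideal.one_eq_top] at hkill
    exact absurd (one_smul R x ▸ hkill 1 Submodule.mem_top) hx
  | succ k ih =>
    by_cases h : ∀ y ∈ N, y • x ∈ K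
    · exact ⟨1, by rwa [one_smul], by simpa only [one_smul] using h⟩
    push Not at h
    obtain ⟨y, hy, hyx⟩ := h
    obtain ⟨r, hr, hrN⟩ := ih hyx fun z hz => by
      rw [smul_smul]
      exact hkill _ (Submodule.pow_succ N ▸ Ideal.mul_mem_mul hz hy)
    exact ⟨r * y, by rwa [mul_smul], fun z hz => by rw [mul_smul]; exact hrN z hz⟩

theorem IsArtinianModTorsion.isEventuallyTorsion_of_le_span_singleton (hπ : Surjective π)
    (h : IsArtinianModTorsion T S) {f : ℕ → Submodule R M} (hf : Antitone f) {t : M}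
    (hft : ∀ n, f n ≤ Submodule.span R {t}) (hker : ∀ n, ∀ y ∈ RingHom.ker π, y • t ∈ f n) :
    IsEventuallyTorsion (T.comap π) f := by
  let I : ℕ → Ideal R := fun n => (f n).comap (LinearMap.toSpanSingleton R M t)
  have hI : ∀ n, RingHom.ker π ≤ I n := hker
  obtain ⟨n, hn⟩ := h (fun n => (I n).map π)
    fun i j hij => Ideal.map_mono (Submodule.comap_mono (hf hij))
  refine ⟨n, fun m hm x hx => ?_⟩
  obtain ⟨r, rfl⟩ := Submodule.mem_span_singleton.mp (hft n hx)
  obtain ⟨α, hα, hαr⟩ := hn m hm (π r) (Ideal.mem_map_of_mem π hx)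
  obtain ⟨d, rfl⟩ := hπ α
  refine ⟨d, hα, ?_⟩
  rw [smul_eq_mul, ← map_mul, ← Ideal.mem_comap, Ideal.comap_map_of_surjective' π hπ,
    sup_eq_left.mpr (hI m)] at hαr
  rw [smul_smul]
  exact hαr

theorem IsArtinianModTorsion.of_ker_isNilpotentIdeal [IsNoetherian R M] (hπ : Surjective π)
    (hN : IsNilpotentIdeal (RingHom.ker π)) (h : IsArtinianModTorsion T S) :
    IsArtinianModTorsion (T.comap π) M := by
  suffices ∀ K : Submodule R M, ∀ f : ℕ → Submodule R M, Antitone f → (∀ n, K ≤ f n) →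
      IsEventuallyTorsion (T.comap π) f from fun f hf => this ⊥ f hf fun _ => bot_le
  intro K
  induction K using IsNoetherian.induction with | _ K ih
  intro f hf hKf
  by_cases hK : K = ⊤
  · exact ⟨0, fun m _ => .of_le (le_top.trans (hK ▸ hKf m))⟩
  obtain ⟨x, -, hx⟩ := SetLike.exists_of_lt (lt_top_iff_ne_top.mpr hK)
  obtain ⟨r, hr, hrN⟩ := hN.exists_smul_notMem hx
  refine .of_inf_of_sup hf (C := Submodule.span R {r • x}) ?_ ?_
  · exact h.isEventuallyTorsion_of_le_span_singleton hπ
      (fun i j hij => inf_le_inf_right _ (hf hij)) (fun _ => inf_le_right)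
      fun n y hy => ⟨hKf n (hrN y hy), Submodule.smul_mem _ y (Submodule.mem_span_singleton_self _)⟩
  · refine ih (K ⊔ Submodule.span R {r • x}) ?_ _ (fun i j hij => sup_le_sup_right (hf hij) _)
      fun n => sup_le_sup_right (hKf n) _
    rwa [gt_iff_lt, left_lt_sup, Submodule.span_singleton_le_iff_mem]

end NilpotentKernel

section Lifting

variable {R S : Type*} [Ring R] [Ring S] {π : R →+* S} {T : Submonoid S}

theorem mulRight_injective_of_mem_nonZeroDivisors {c : R} (hc : c ∈ R⁰) :
    Injective (LinearMap.mulRight R c) :=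
  (injective_iff_map_eq_zero _).mpr hc.2

theorem IsTorsionOver.eq_bot_of_forall_exists_lift (hN : IsNilpotentIdeal (RingHom.ker π))
    (hlift : ∀ α ∈ T, ∃ c ∈ R⁰, π c = α) {L : Ideal R}
    (hL : IsTorsionOver (T.comap π) L ⊥) : L = ⊥ := by
  refine (Submodule.eq_bot_iff L).mpr fun x hx => ?_
  by_contra hx0
  obtain ⟨r, hr, hrN⟩ := hN.exists_smul_notMem (K := (⊥ : Ideal R)) hx0
  simp only [Submodule.mem_bot, smul_eq_mul] at hr hrN
  obtain ⟨d, hd, hdrx⟩ := hL (r * x) (L.mul_mem_left r hx)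
  rw [Submodule.mem_bot, smul_eq_mul] at hdrx
  obtain ⟨e, he, hed⟩ := hlift _ hd
  refine hr (he.1 _ ?_)
  calc e * (r * x) = (e - d) * (r * x) := by rw [sub_mul, hdrx, sub_zero]
    _ = 0 := hrN _ (by rw [RingHom.mem_ker, map_sub, hed, sub_self])

theorem IsArtinianModTorsion.isTorsionOver_range_mulRight_of_lift
    (h : IsArtinianModTorsion (T.comap π) R) (hN : IsNilpotentIdeal (RingHom.ker π)) {c e : R}
    (he : e ∈ R⁰) (hec : π e = π c) :
    IsTorsionOver (T.comap π) ⊤ (LinearMap.range (LinearMap.mulRight R c)) := by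
  have hstep : ∀ i, Submodule.map (LinearMap.mulRight R e) (RingHom.ker π ^ i) ≤
      LinearMap.range (LinearMap.mulRight R c) ⊔ RingHom.ker π ^ (i + 1) := by
    rintro i _ ⟨w, hw, rfl⟩
    refine Submodule.mem_sup.mpr ⟨w * c, ⟨w, rfl⟩, w * (e - c), ?_, ?_⟩
    · rw [Submodule.pow_succ]
      exact Ideal.mul_mem_mul hw (by rw [RingHom.mem_ker, map_sub, hec, sub_self])
    · rw [← mul_add, add_sub_cancel, LinearMap.mulRight_apply]
  have hfil : ∀ i, IsTorsionOver (T.comap π) ⊤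
      (LinearMap.range (LinearMap.mulRight R c) ⊔ RingHom.ker π ^ i) := by
    intro i
    induction i with
    | zero => exact .of_le (by rw [Submodule.pow_zero, Ideal.one_eq_top, sup_top_eq])
    | succ i ih =>
      refine ih.trans (.sup_of_le ?_ le_sup_left)
      refine (h.isTorsionOver_map_of_injective
        (mulRight_injective_of_mem_nonZeroDivisors he) ?_).mono le_rfl (hstep i)
      exact Submodule.map_le_iff_le_comap.mpr fun w hw => Ideal.mul_mem_right e _ hw
  obtain ⟨k, hk⟩ := hN
  simpa only [hk, sup_bot_eq] using hfil (k + 1)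

theorem IsArtinianModTorsion.comap_le_nonZeroDivisors_of_forall_exists_lift [IsNoetherianRing R]
    (h : IsArtinianModTorsion (T.comap π) R) (hN : IsNilpotentIdeal (RingHom.ker π))
    (hlift : ∀ α ∈ T, ∃ c ∈ R⁰, π c = α) : T.comap π ≤ R⁰ := by
  intro c hc
  obtain ⟨e, he, hec⟩ := hlift _ hc
  have htors := h.isTorsionOver_range_mulRight_of_lift hN he hec
  refine ⟨fun r hr => ?_, fun r hr => ?_⟩
  · have hbot : Submodule.map (LinearMap.mulRight R r) ⊤ = ⊥ := by
      refine IsTorsionOver.eq_bot_of_forall_exists_lift hN hlift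
        ((htors.map (LinearMap.mulRight R r)).mono le_rfl ?_)
      rintro _ ⟨_, ⟨s, rfl⟩, rfl⟩
      simp only [LinearMap.mulRight_apply, mul_assoc, hr, mul_zero, zero_mem]
    exact (Submodule.eq_bot_iff _).mp hbot r ⟨1, Submodule.mem_top, one_mul r⟩
  · exact (Submodule.eq_bot_iff _).mp
      (htors.ker_bot.eq_bot_of_forall_exists_lift hN hlift) r hr

end Lifting

section LeftQuotientRing

variable {R : Type*} [Ring R] {Q : Type*} [Ring Q] {φ : R →+* Q}

theorem IsLeftQuotRing.mem_nonZeroDivisors_of_isUnit (hφ : IsLeftQuotRing φ) {c : R}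
    (hc : IsUnit (φ c)) : c ∈ R⁰ :=
  comap_nonZeroDivisors_le_of_injective hφ.inj hc.mem_nonZeroDivisors

theorem nonempty_leftQuotData {R : Type u} [Ring R]
    (hOre : ∀ c ∈ R⁰, IsTorsionOver R⁰ ⊤ (LinearMap.range (LinearMap.mulRight R c))) :
    Nonempty (LeftQuotData R) := by
  obtain ⟨hset⟩ : Nonempty (OreLocalization.OreSet R⁰) := by
    refine OreLocalization.nonempty_oreSet_iff.mpr ⟨fun r₁ r₂ s h => ⟨1, ?_⟩, fun r s => ?_⟩
    · have hsub : r₁ - r₂ = 0 := s.2.2 _ (by rw [sub_mul, h, sub_self])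
      rw [sub_eq_zero.mp hsub]
    · obtain ⟨d, hd, b, hb⟩ := hOre s s.2 r Submodule.mem_top
      exact ⟨b, ⟨d, hd⟩, hb.symm⟩
  refine ⟨⟨OreLocalization R⁰ R, OreLocalization.numeratorRingHom, ?_, ?_, fun q => ?_⟩⟩
  · exact OreLocalization.numeratorHom_inj inf_le_left
  · exact fun c hc => OreLocalization.numerator_isUnit (⟨c, hc⟩ : R⁰)
  · induction q using OreLocalization.ind with | _ r s
    exact ⟨s, r, s.2, OreLocalization.mul_cancel⟩

theorem IsLeftQuotRing.le_of_isTorsionOver_comap (hφ : IsLeftQuotRing φ) {I J : Ideal Q}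
    (h : IsTorsionOver R⁰ (I.comap φ) (J.comap φ)) : I ≤ J := by
  intro q hq
  obtain ⟨c, r, hc, hcr⟩ := hφ.denom q
  obtain ⟨d, hd, hdr⟩ := h r (by rw [Ideal.mem_comap, ← hcr]; exact I.mul_mem_left _ hq)
  obtain ⟨u, hu⟩ := hφ.isUnit (d * c) (mul_mem hd hc)
  rw [smul_eq_mul, Ideal.mem_comap, map_mul, ← hcr, ← mul_assoc, ← map_mul, ← hu] at hdr
  simpa only [Units.inv_mul_cancel_left] using J.mul_mem_left (↑u⁻¹) hdr

theorem IsLeftQuotRing.isArtinianRing (hφ : IsLeftQuotRing φ) (h : IsArtinianModTorsion R⁰ R) :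
    IsArtinianRing Q := by
  refine monotone_stabilizes_iff_artinian.mp fun f => ?_
  obtain ⟨n, hn⟩ := h (fun n => Ideal.comap φ (f n).ofDual)
    fun i j hij => Ideal.comap_mono (f.monotone hij)
  exact ⟨n, fun m hm => le_antisymm (f.monotone hm) (hφ.le_of_isTorsionOver_comap (hn m hm))⟩

theorem hasArtinianLeftQuot_of_isArtinianModTorsion {R : Type u} [Ring R]
    (h : IsArtinianModTorsion R⁰ R) : HasArtinianLeftQuot R := by
  obtain ⟨D⟩ := nonempty_leftQuotData (R := R) fun c hc => by
    rw [LinearMap.range_eq_map]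
    exact h.isTorsionOver_map_of_injective (mulRight_injective_of_mem_nonZeroDivisors hc) le_top
  exact ⟨D, D.quot.isArtinianRing h⟩

end LeftQuotientRing

section ArtinianQuotient

variable {R S Q : Type*} [Ring R] [Ring S] [Ring Q] {π : R →+* S} {φ : R →+* Q}

theorem mul_unit_inv_mem_of_forall_mul_unit_mem [IsArtinianRing Q] {J : Ideal Q} {u : Qˣ}
    (hu : ∀ j ∈ J, j * u ∈ J) {j : Q} (hj : j ∈ J) : j * ↑u⁻¹ ∈ J := by
  let g : J →ₗ[Q] J := (LinearMap.mulRight Q (u : Q)).restrict hu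
  have hg : Injective g := fun x y hxy =>
    Subtype.ext (u.isUnit.mul_left_injective (congrArg Subtype.val hxy))
  obtain ⟨i, hi⟩ := IsArtinian.surjective_of_injective_endomorphism g hg ⟨j, hj⟩
  have hij : (i : Q) * u = j := congrArg Subtype.val hi
  rw [← hij, Units.mul_inv_cancel_right]
  exact i.2

theorem IsLeftQuotRing.isTwoSided_map [IsArtinianRing Q] (hφ : IsLeftQuotRing φ) (I : Ideal R)
    [I.IsTwoSided] : (I.map φ).IsTwoSided := by
  have hmul (r : R) : I.map φ ≤ Submodule.comap (LinearMap.mulRight Q (φ r)) (I.map φ) := by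
    refine Submodule.span_le.mpr ?_
    rintro _ ⟨s, hs, rfl⟩
    rw [SetLike.mem_coe, Submodule.mem_comap, LinearMap.mulRight_apply, ← map_mul]
    exact Ideal.mem_map_of_mem φ (I.mul_mem_right r hs)
  refine ⟨fun {j} q hj => ?_⟩
  obtain ⟨c, r, hc, hq⟩ := hφ.denom q
  obtain ⟨u, hu⟩ := hφ.isUnit c hc
  have hq' : j * q = j * ↑u⁻¹ * φ r := by rw [← hq, ← hu, mul_assoc, Units.inv_mul_cancel_left]
  rw [hq']
  exact hmul r (mul_unit_inv_mem_of_forall_mul_unit_mem (fun i hi => hu ▸ hmul c hi) hj)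

open scoped Pointwise in
theorem IsLeftQuotRing.map_pow_le [IsArtinianRing Q] (hφ : IsLeftQuotRing φ) (I : Ideal R)
    [I.IsTwoSided] (k : ℕ) : I.map φ ^ k ≤ (I ^ k).map φ := by
  induction k with
  | zero =>
    rw [Submodule.pow_zero (M := I), Ideal.one_eq_top, Ideal.map_top]
    exact le_top
  | succ k ih =>
    have hIk : (Ideal.span (φ '' (I ^ k : Ideal R))).IsTwoSided := hφ.isTwoSided_map (I ^ k)
    calc I.map φ ^ (k + 1) = I.map φ ^ k * I.map φ := Submodule.pow_succ _
      _ ≤ (I ^ k).map φ * I.map φ := Ideal.mul_mono_left ih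
      _ = Ideal.span (φ '' (I ^ k : Ideal R) * φ '' I) := Ideal.span_mul_span _ _
      _ ≤ (I ^ (k + 1)).map φ := Ideal.span_le.mpr ?_
    rintro _ ⟨_, ⟨x, hx, rfl⟩, _, ⟨y, hy, rfl⟩, rfl⟩
    dsimp only
    rw [SetLike.mem_coe, ← map_mul, Submodule.pow_succ]
    exact Ideal.mem_map_of_mem φ (Ideal.mul_mem_mul hx hy)

theorem IsLeftQuotRing.isNilpotent_of_mem_map [IsArtinianRing Q] (hφ : IsLeftQuotRing φ)
    {I : Ideal R} [I.IsTwoSided] (hI : IsNilpotentIdeal I) {x : Q} (hx : x ∈ I.map φ) :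
    IsNilpotent x := by
  obtain ⟨k, hk⟩ := hI
  refine ⟨k + 1, (Submodule.mem_bot Q).mp ?_⟩
  rw [← Ideal.map_bot (f := φ), ← hk]
  exact hφ.map_pow_le I (k + 1) (Ideal.pow_mem_pow hx (k + 1))

theorem IsSemiprimeRing.comap_le_ker_of_forall_isNilpotent [IsNoetherianRing S]
    (hS : IsSemiprimeRing S) (hπ : Surjective π) (hφ : Injective φ) {J : Ideal Q}
    (hJ : ∀ x ∈ J, IsNilpotent x) : J.comap φ ≤ RingHom.ker π := by
  intro x hx
  refine hS.eq_zero_of_forall_isNilpotent_mul fun s => ?_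
  obtain ⟨r, rfl⟩ := hπ s
  have hnil : IsNilpotent (φ (r * x)) := hJ _ ((J.comap φ).mul_mem_left r hx)
  rw [← map_mul]
  exact ((IsNilpotent.map_iff hφ).mp hnil).map π

theorem isUnit_of_forall_mul_mem [IsArtinianRing Q] {J : Ideal Q} [J.IsTwoSided]
    (hJ : ∀ x ∈ J, IsNilpotent x) {a : Q} (ha : ∀ q, q * a ∈ J → q ∈ J) : IsUnit a := by
  have hreg : IsRightRegular (Ideal.Quotient.mk J a) := by
    refine isRightRegular_iff_left_eq_zero_of_mul.mpr fun x hx => ?_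
    obtain ⟨q, rfl⟩ := Ideal.Quotient.mk_surjective x
    rw [← map_mul, Ideal.Quotient.eq_zero_iff_mem] at hx
    exact Ideal.Quotient.eq_zero_iff_mem.mpr (ha q hx)
  obtain ⟨x, hx⟩ := (IsArtinianRing.isUnit_iff_isRightRegular.mpr hreg).exists_left_inv
  obtain ⟨q, rfl⟩ := Ideal.Quotient.mk_surjective x
  have hq : q * a - 1 ∈ J := Ideal.Quotient.eq.mp hx
  obtain ⟨v, hv⟩ := (hJ _ hq).isUnit_one_add
  rw [add_sub_cancel] at hv
  refine IsUnit.of_mul_eq_one_right (↑v⁻¹ * q) ?_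
  rw [mul_assoc, ← hv, Units.inv_mul]

theorem IsLeftQuotRing.comap_nonZeroDivisors_le [IsNoetherianRing S] [IsArtinianRing Q]
    (hφ : IsLeftQuotRing φ) (hπ : Surjective π) (hS : IsSemiprimeRing S)
    (hN : IsNilpotentIdeal (RingHom.ker π)) : S⁰.comap π ≤ R⁰ := by
  intro c hc
  have hJ := hφ.isTwoSided_map (RingHom.ker π)
  have hnil : ∀ x ∈ (RingHom.ker π).map φ, IsNilpotent x := fun _ => hφ.isNilpotent_of_mem_map hN
  refine hφ.mem_nonZeroDivisors_of_isUnit (isUnit_of_forall_mul_mem hnil fun q hq => ?_)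
  obtain ⟨s, r, hs, hsr⟩ := hφ.denom q
  have hrc : r * c ∈ RingHom.ker π := by
    refine hS.comap_le_ker_of_forall_isNilpotent hπ hφ.inj hnil ?_
    rw [Ideal.mem_comap, map_mul, ← hsr, mul_assoc]
    exact Ideal.mul_mem_left _ _ hq
  have hr : r ∈ RingHom.ker π := hc.2 _ (by rwa [RingHom.mem_ker, map_mul] at hrc)
  obtain ⟨u, hu⟩ := hφ.isUnit s hs
  rw [← u.inv_mul_cancel_left q, hu, hsr]
  exact Ideal.mul_mem_left _ _ (Ideal.mem_map_of_mem φ hr)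

end ArtinianQuotient

section PrimeRadical

variable {R S : Type*} [Ring R] [Ring S]

theorem isSemiprimeRing_of_ker_eq_primeRadical {π : R →+* S} (hπ : Surjective π)
    (hker : RingHom.ker π = primeRadical R) : IsSemiprimeRing S := by
  intro b hb
  obtain ⟨x, rfl⟩ := hπ b
  rw [← RingHom.mem_ker, hker]
  refine Submodule.mem_sInf.mpr fun P hP => ?_
  refine or_self_iff.mp (hP.2.2 x x fun r => ?_)
  have hxrx : x * r * x ∈ primeRadical R := by
    rw [← hker, RingHom.mem_ker, map_mul, map_mul, hb]
  exact Submodule.mem_sInf.mp hxrx P hP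

theorem exists_lt_lt_mul_le_of_not_isPrimeNC {I : Ideal R} [I.IsTwoSided] (hI : I ≠ ⊤)
    (h : ¬I.IsPrimeNC) :
    ∃ A B : Ideal R, A.IsTwoSided ∧ B.IsTwoSided ∧ I < A ∧ I < B ∧ A * B ≤ I := by
  obtain ⟨a, b, hab, ha, hb⟩ : ∃ a b, (∀ r, a * r * b ∈ I) ∧ a ∉ I ∧ b ∉ I := by
    by_contra! hprime
    exact h ⟨hI, fun a ha r => I.mul_mem_right r ha, fun a b hab =>
      or_iff_not_imp_left.mpr (hprime a b hab)⟩
  set b' : Ideal R := Ideal.span {b}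
  have haA : a ∈ I.colon (b' : Set R) := Submodule.mem_colon.mpr fun y hy => by
    obtain ⟨r, rfl⟩ := Ideal.mem_span_singleton'.mp hy
    rw [smul_eq_mul, ← mul_assoc]
    exact hab r
  have hbB : b ∈ I ⊔ b' * ⊤ := Submodule.mem_sup_right
    (mul_one b ▸ Ideal.mul_mem_mul (Ideal.mem_span_singleton_self b) Submodule.mem_top)
  refine ⟨I.colon (b' : Set R), I ⊔ b' * ⊤, inferInstance, ⟨fun {y} r hy => ?_⟩,
    SetLike.lt_iff_le_and_exists.mpr ⟨Ideal.le_colon, a, haA, ha⟩,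
    SetLike.lt_iff_le_and_exists.mpr ⟨le_sup_left, b, hbB, hb⟩, ?_⟩
  · obtain ⟨i, hi, z, hz, rfl⟩ := Submodule.mem_sup.mp hy
    rw [add_mul]
    exact Submodule.add_mem_sup (I.mul_mem_right r hi) (Ideal.mul_mem_right r _ hz)
  · have hAb : I.colon (b' : Set R) * b' ≤ I :=
      Ideal.mul_le.mpr fun x hx y hy => Submodule.mem_colon.mp hx y hy
    rw [Ideal.mul_sup, ← mul_assoc]
    exact sup_le Ideal.mul_le_right ((Ideal.mul_mono_left hAb).trans Ideal.mul_le_left)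

theorem isNilpotentIdeal_primeRadical [IsNoetherianRing R] :
    IsNilpotentIdeal (primeRadical R) := by
  suffices ∀ I : Ideal R, I.IsTwoSided → ∃ k, primeRadical R ^ (k + 1) ≤ I from
    (this ⊥ inferInstance).imp fun k hk => le_bot_iff.mp hk
  intro I
  induction I using IsNoetherian.induction with | _ I ih
  intro hI
  by_cases htop : I = ⊤
  · exact ⟨0, htop ▸ le_top⟩
  by_cases hprime : Ideal.IsPrimeNC I
  · exact ⟨0, by rw [zero_add, Submodule.pow_one]; exact sInf_le hprime⟩
  obtain ⟨A, B, hA, hB, hIA, hIB, hAB⟩ := exists_lt_lt_mul_le_of_not_isPrimeNC htop hprime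
  obtain ⟨k, hk⟩ := ih A hIA hA
  obtain ⟨l, hl⟩ := ih B hIB hB
  refine ⟨k + 1 + l, ?_⟩
  rw [add_assoc, Submodule.pow_add _ l.succ_ne_zero]
  exact (Ideal.mul_mono hk hl).trans hAB

end PrimeRadical

theorem isRegElem_iff_mem_nonZeroDivisors {R : Type*} [Ring R] {c : R} : IsRegElem c ↔ c ∈ R⁰ :=
  Iff.rfl

/-- **Corollary (`A2Sep12`; Small).** Let `R` be a left Noetherian ring, `n` its prime
radical, `R̄ = R/n` (realized by a surjective `π` with kernel `n`).  TFAE: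
(1) `R` has a left Artinian left quotient ring;
(2) `C' ⊆ C`;
(3) every regular element of `R̄` lifts to a regular element of `R`. -/
theorem left_noetherian_small_criterion
    {R : Type u} [Ring R] [IsNoetherianRing R] (Rbar : Type v) [Ring Rbar] (π : R →+* Rbar)
    (hπsurj : Function.Surjective π) (hπker : RingHom.ker π = primeRadical R) :
    (HasArtinianLeftQuot R ↔ (∀ c : R, IsRegElem (π c) → IsRegElem c)) ∧
    ((∀ c : R, IsRegElem (π c) → IsRegElem c) ↔
      (∀ α : Rbar, IsRegElem α → ∃ c : R, IsRegElem c ∧ π c = α)) := by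
  have hN : IsNilpotentIdeal (RingHom.ker π) := hπker ▸ isNilpotentIdeal_primeRadical
  have hS : IsSemiprimeRing Rbar := isSemiprimeRing_of_ker_eq_primeRadical hπsurj hπker
  have : IsNoetherianRing Rbar := isNoetherianRing_of_surjective R Rbar π hπsurj
  have hart : IsArtinianModTorsion (Rbar⁰.comap π) R :=
    hS.isArtinianModTorsion.of_ker_isNilpotentIdeal hπsurj hN
  simp only [isRegElem_iff_mem_nonZeroDivisors]
  refine ⟨⟨?_, fun hreg => ?_⟩, fun hreg α hα => ?_, fun hlift => ?_⟩
  · rintro ⟨D, hD⟩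
    exact D.quot.comap_nonZeroDivisors_le hπsurj hS hN
  · exact hasArtinianLeftQuot_of_isArtinianModTorsion (hart.mono hreg)
  · obtain ⟨c, rfl⟩ := hπsurj α
    exact ⟨c, hreg c hα, rfl⟩
  · exact hart.comap_le_nonZeroDivisors_of_forall_exists_lift hN hlift
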